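/- arXiv:2302.14787 — 3 statements merged into one kernel-verified Lean document; each statement's English description precedes it below -/
import Mathlib

section
/- Let g be a Lie algebra over ℂ containing an sl₂-triple (x, y, h), let A be a commutative associative unital ℂ-algebra generated as a ℂ-algebra by elements a₁, …, a_m, and let M be a module over the current Lie algebra g ⊗ A. Suppose w ∈ M and ψ : A → ℂ is a linear map such that (x ⊗ a) • w = 0 and (h ⊗ a) • w = ψ(a)·w for all a ∈ A, that N := ψ(1) is a nonnegative integer, and that (y ⊗ 1)^{N+1} • w = 0. Then for all s₁, …, s_m ∈ ℕ, the vector (y ⊗ a₁^{s₁}⋯a_m^{s_m}) • w lies in span_ℂ{ (y ⊗ a₁^{ℓ₁}⋯a_m^{ℓ_m}) • w : 0 ≤ ℓᵢ < N for i = 1, …, m }. In particular, the subspace span_ℂ{ (y ⊗ a) • w : a ∈ A } of M is finite dimensional. -/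
open scoped TensorProduct

/-- The current Lie algebra `g ⊗ A` (realized as `A ⊗[ℂ] g`, with bracket
`⁅a ⊗ x, b ⊗ y⁆ = ab ⊗ ⁅x, y⁆`) is a Lie algebra over `ℂ`. -/
noncomputable instance currentLieAlgebra {A g : Type*} [CommRing A] [Algebra ℂ A]
    [LieRing g] [LieAlgebra ℂ g] : LieAlgebra ℂ (A ⊗[ℂ] g) where
  lie_smul c x y := by
    rw [← algebraMap_smul A c y, lie_smul, algebraMap_smul]

/-!
Write `x_b`, `y_b`, `h_b` for the actions of `b ⊗ x`, `b ⊗ y`, `b ⊗ h`. Applying `x_b ^ N` to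
`y_1 ^ (N + 1) w = 0` gives a combination of the vectors `y_{b ^ e} w` with `e ≤ N` in which the
coefficient of `y_{b ^ N} w` is `(-1) ^ N N! (N + 1)!`, so `y_{b ^ N} w` lies in the span of the
`y_{b ^ e} w` with `e < N`. The elements `c` with `y_c w = 0` form an ideal `I` of `A`, because
`h_b y_c w = ψ(b) y_c w - 2 y_{bc} w`. Hence in the ring `A ⧸ I` the `N`-th power of every element
is a combination of its smaller powers, which reduces every monomial in the `a i` to monomials with
all exponents less than `N`.
-/

section LeadingTerms

variable {K M : Type*} [CommRing K] [AddCommGroup M] [Module K M]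
  {y h : ℕ → Module.End K M} {x : Module.End K M} {w : M} {ψ : ℕ → K}

/-- Leading coefficients of combinations of the vectors `y e₁ ⋯ y eᵣ w`, graded by `e₁ + ⋯ + eᵣ`:
the pairs `(c, v)` such that `v` is a combination of such vectors of degree at most `d` in which the
coefficients of those of degree exactly `d` add up to `c`. It is a relation rather than a function
of `v` because the vectors may be linearly dependent. -/
def leadingTerms (y : ℕ → Module.End K M) (w : M) (r d : ℕ) : Submodule K (K × M) :=
  Submodule.span K {q | ∃ l : List ℕ, l.length = r ∧
    (l.sum = d ∧ q = (1, (l.map y).prod w) ∨ l.sum < d ∧ q = (0, (l.map y).prod w))}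

namespace leadingTerms

theorem one_mem (l : List ℕ) :
    ((1 : K), (l.map y).prod w) ∈ leadingTerms y w l.length l.sum :=
  Submodule.subset_span ⟨l, rfl, Or.inl ⟨rfl, rfl⟩⟩

theorem zero_mem {l : List ℕ} {d : ℕ} (hl : l.sum < d) :
    ((0 : K), (l.map y).prod w) ∈ leadingTerms y w l.length d :=
  Submodule.subset_span ⟨l, rfl, Or.inr ⟨hl, rfl⟩⟩

theorem zero_mem_of_lt {r d d' : ℕ} (hd : d < d') {c : K} {v : M}
    (hv : (c, v) ∈ leadingTerms y w r d) : ((0 : K), v) ∈ leadingTerms y w r d' := by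
  suffices leadingTerms y w r d ≤
      (leadingTerms y w r d').comap ((0 : K →ₗ[K] K).prodMap LinearMap.id) from this hv
  refine Submodule.span_le.2 ?_
  rintro _ ⟨l, rfl, ⟨hl, rfl⟩ | ⟨hl, rfl⟩⟩ <;>
    simpa using zero_mem (y := y) (w := w) (l := l) (by omega)

theorem map_mem {T : Module.End K M} {k : K} {r r' j : ℕ}
    (hT : ∀ l : List ℕ, l.length = r →
      (k, T ((l.map y).prod w)) ∈ leadingTerms y w r' (l.sum + j))
    {d : ℕ} {c : K} {v : M} (hv : (c, v) ∈ leadingTerms y w r d) :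
    (k * c, T v) ∈ leadingTerms y w r' (d + j) := by
  suffices leadingTerms y w r d ≤
      (leadingTerms y w r' (d + j)).comap ((LinearMap.mulLeft K k).prodMap T) from this hv
  refine Submodule.span_le.2 ?_
  rintro _ ⟨l, hr, ⟨rfl, rfl⟩ | ⟨hl, rfl⟩⟩
  · simpa using hT l hr
  · simpa using zero_mem_of_lt (Nat.add_lt_add_right hl j) (hT l hr)

theorem lower_mem (e : ℕ) {r d : ℕ} {c : K} {v : M} (hv : (c, v) ∈ leadingTerms y w r d) :
    (c, y e v) ∈ leadingTerms y w (r + 1) (d + e) := by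
  simpa using map_mem (T := y e) (k := 1)
    (fun l hl ↦ by simpa [hl, add_comm] using one_mem (y := y) (w := w) (e :: l)) hv

theorem weight_list_mem (hhw : ∀ k, h k w = ψ k • w)
    (hhy : ∀ k e, ⁅h k, y e⁆ = (-2 : K) • y (k + e)) {k : ℕ} (hk : 0 < k) (l : List ℕ) :
    (-2 * (l.length : K), h k ((l.map y).prod w)) ∈ leadingTerms y w l.length (l.sum + k) := by
  induction l with
  | nil =>
    simpa [hhw] using Submodule.smul_mem _ (ψ k) (zero_mem (y := y) (w := w) (l := []) hk)
  | cons e l ih =>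
    have hlower := lower_mem e ih
    have hmerge := one_mem (y := y) (w := w) ((k + e) :: l)
    rw [show ((k + e) :: l).sum = l.sum + k + e by simp only [List.sum_cons]; omega] at hmerge
    have hcomm : h k (((e :: l).map y).prod w) =
        y e (h k ((l.map y).prod w)) + (-2 : K) • (((k + e) :: l).map y).prod w := by
      simpa [Ring.lie_def, sub_eq_iff_eq_add'] using
        LinearMap.congr_fun (hhy k e) ((l.map y).prod w)
    rw [hcomm, List.length_cons,
      show (e :: l).sum + k = l.sum + k + e by simp only [List.sum_cons]; omega]
    convert Submodule.add_mem _ hlower (Submodule.smul_mem _ (-2 : K) hmerge) using 1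
    refine Prod.ext ?_ rfl
    simp [mul_add]

theorem raise_list_mem (hxw : x w = 0) (hhw : ∀ k, h k w = ψ k • w)
    (hhy : ∀ k e, ⁅h k, y e⁆ = (-2 : K) • y (k + e)) (hxy : ∀ e, ⁅x, y e⁆ = h (e + 1))
    (l : List ℕ) {r : ℕ} (hr : l.length = r + 1) :
    (-(r * (r + 1) : K), x ((l.map y).prod w)) ∈ leadingTerms y w r (l.sum + 1) := by
  induction l generalizing r with
  | nil => simp at hr
  | cons e l ih =>
    obtain rfl : l.length = r := by simpa using hr
    have hweight := weight_list_mem hhw hhy e.succ_pos l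
    have hcomm : x (((e :: l).map y).prod w) =
        y e (x ((l.map y).prod w)) + h (e + 1) ((l.map y).prod w) := by
      simpa [Ring.lie_def, sub_eq_iff_eq_add'] using LinearMap.congr_fun (hxy e) ((l.map y).prod w)
    rw [hcomm, show (e :: l).sum + 1 = l.sum + (e + 1) by simp only [List.sum_cons]; omega]
    cases l with
    | nil => simpa [hxw] using hweight
    | cons f l =>
      have hlower := lower_mem e (ih rfl)
      rw [add_right_comm, add_assoc] at hlower
      rw [List.length_cons] at hweight ⊢
      convert Submodule.add_mem _ hlower hweight using 1
      refine Prod.ext ?_ rfl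
      simp only [Prod.fst_add]
      push_cast
      ring

theorem raise_pow_mem (hxw : x w = 0) (hhw : ∀ k, h k w = ψ k • w)
    (hhy : ∀ k e, ⁅h k, y e⁆ = (-2 : K) • y (k + e)) (hxy : ∀ e, ⁅x, y e⁆ = h (e + 1))
    (r : ℕ) {d : ℕ} {c : K} {v : M} (hv : (c, v) ∈ leadingTerms y w (r + 1) d) :
    ((-1) ^ r * r.factorial * (r + 1).factorial * c, (x ^ r) v) ∈
      leadingTerms y w 1 (d + r) := by
  induction r generalizing d c v with
  | zero => simpa using hv
  | succ r ih =>
    have hraise := ih (map_mem (fun l hl ↦ raise_list_mem hxw hhw hhy hxy l hl) hv)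
    rw [show d + 1 + r = d + (r + 1) by omega] at hraise
    convert hraise using 2
    · push_cast [Nat.factorial_succ]
      ring
    · rw [pow_succ, Module.End.mul_apply]

theorem sub_smul_mem_span {d : ℕ} {q : K × M} (hq : q ∈ leadingTerms y w 1 d) :
    q.2 - q.1 • y d w ∈ Submodule.span K ((fun e ↦ y e w) '' Set.Iio d) := by
  suffices leadingTerms y w 1 d ≤ (Submodule.span K ((fun e ↦ y e w) '' Set.Iio d)).comap
      (LinearMap.snd K K M - (LinearMap.fst K K M).smulRight (y d w)) from this hq
  refine Submodule.span_le.2 ?_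
  rintro _ ⟨l, hl, hq⟩
  obtain ⟨e, rfl⟩ := List.length_eq_one_iff.1 hl
  rcases hq with ⟨rfl, rfl⟩ | ⟨he, rfl⟩
  · simp
  · simpa using Submodule.subset_span (Set.mem_image_of_mem (fun e ↦ y e w) (by simpa using he))

end leadingTerms

theorem raise_pow_lower_pow_sub_smul_mem_span (hxw : x w = 0) (hhw : ∀ k, h k w = ψ k • w)
    (hhy : ∀ k e, ⁅h k, y e⁆ = (-2 : K) • y (k + e)) (hxy : ∀ e, ⁅x, y e⁆ = h (e + 1)) (n : ℕ) :
    (x ^ n) ((y 0 ^ (n + 1)) w) - ((-1) ^ n * n.factorial * (n + 1).factorial : K) • y n w ∈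
      Submodule.span K ((fun e ↦ y e w) '' Set.Iio n) := by
  have hlower : ((1 : K), (y 0 ^ (n + 1)) w) ∈ leadingTerms y w (n + 1) 0 := by
    simpa using leadingTerms.one_mem (y := y) (w := w) (List.replicate (n + 1) 0)
  simpa using leadingTerms.sub_smul_mem_span
    (leadingTerms.raise_pow_mem hxw hhw hhy hxy n hlower)

theorem lower_mem_span_of_lower_pow_eq_zero (hxw : x w = 0) (hhw : ∀ k, h k w = ψ k • w)
    (hhy : ∀ k e, ⁅h k, y e⁆ = (-2 : K) • y (k + e)) (hxy : ∀ e, ⁅x, y e⁆ = h (e + 1)) {n : ℕ}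
    (hn : IsUnit ((n + 1).factorial : K)) (hyw : (y 0 ^ (n + 1)) w = 0) :
    y n w ∈ Submodule.span K ((fun e ↦ y e w) '' Set.Iio n) := by
  have hcoeff : IsUnit ((-1) ^ n * n.factorial * (n + 1).factorial : K) := by
    have hfac : IsUnit (n.factorial : K) :=
      isUnit_of_dvd_unit (Nat.cast_dvd_cast (Nat.factorial_dvd_factorial n.le_succ)) hn
    exact ((isUnit_one.neg.pow n).mul hfac).mul hn
  have hmem := raise_pow_lower_pow_sub_smul_mem_span hxw hhw hhy hxy n
  rw [hyw, map_zero, zero_sub, neg_mem_iff] at hmem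
  exact (Submodule.smul_mem_iff_of_isUnit _ hcoeff).1 hmem

end LeadingTerms

section Monomials

variable {K A M ι : Type*}

theorem pow_mem_span_pow_lt [CommSemiring K] [Semiring A] [Algebra K A] {b : A} {n : ℕ}
    (hb : b ^ n ∈ Submodule.span K ((fun j ↦ b ^ j) '' Set.Iio n)) (s : ℕ) :
    b ^ s ∈ Submodule.span K ((fun j ↦ b ^ j) '' Set.Iio n) := by
  set V := Submodule.span K ((fun j ↦ b ^ j) '' Set.Iio n)
  have hpow {j : ℕ} (hj : j ≤ n) : b ^ j ∈ V := by
    rcases hj.lt_or_eq with hj | rfl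
    exacts [Submodule.subset_span ⟨j, hj, rfl⟩, hb]
  have hmul : V ≤ V.comap (LinearMap.mulLeft K b) := by
    refine Submodule.span_le.2 ?_
    rintro _ ⟨j, hj, rfl⟩
    simpa [pow_succ'] using hpow (Nat.succ_le_of_lt hj)
  induction s with
  | zero => exact hpow n.zero_le
  | succ s ih => simpa [pow_succ'] using hmul ih

theorem prod_mem_submodule_prod [CommSemiring K] [CommSemiring A] [Algebra K A]
    {V : ι → Submodule K A} {b : ι → A} (t : Finset ι) (hb : ∀ i ∈ t, b i ∈ V i) :
    ∏ i ∈ t, b i ∈ ∏ i ∈ t, V i := by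
  induction t using Finset.cons_induction with
  | empty => exact Submodule.one_le.1 le_rfl
  | cons i t hi ih =>
    rw [Finset.forall_mem_cons] at hb
    simpa only [Finset.prod_cons] using Submodule.mul_mem_mul hb.1 (ih hb.2)

theorem prod_pow_mem_span_of_pow_mem_span [Fintype ι] [CommSemiring K] [CommSemiring A]
    [Algebra K A] {b : ι → A} {n : ι → ℕ}
    (hb : ∀ i, b i ^ n i ∈ Submodule.span K ((fun j ↦ b i ^ j) '' Set.Iio (n i))) (s : ι → ℕ) :
    ∏ i, b i ^ s i ∈
      Submodule.span K ((fun ℓ : ι → ℕ ↦ ∏ i, b i ^ ℓ i) '' {ℓ | ∀ i, ℓ i < n i}) := by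
  have hprod := prod_mem_submodule_prod Finset.univ fun i _ ↦ pow_mem_span_pow_lt (hb i) (s i)
  rw [Submodule.prod_span] at hprod
  refine Submodule.span_mono ?_ hprod
  intro c hc
  obtain ⟨g, hg, rfl⟩ := (Set.mem_fintype_prod _ _).1 hc
  choose ℓ hℓ hpow using hg
  exact ⟨ℓ, hℓ, Finset.prod_congr rfl fun i _ ↦ hpow i⟩

theorem map_mem_span_image_iff [Ring K] [AddCommGroup A] [Module K A] [AddCommGroup M] [Module K M]
    (f : A →ₗ[K] M) {S : Set A} {u : A} :
    f u ∈ Submodule.span K (f '' S) ↔ u ∈ Submodule.span K S ⊔ f.ker := by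
  rw [← Submodule.map_span, ← Submodule.mem_comap, Submodule.comap_map_eq]

theorem map_prod_pow_mem_span [Fintype ι] [CommRing K] [CommRing A] [Algebra K A]
    [AddCommGroup M] [Module K M] (f : A →ₗ[K] M) (hf : ∀ b c, f c = 0 → f (b * c) = 0)
    {a : ι → A} {n : ι → ℕ}
    (ha : ∀ i, f (a i ^ n i) ∈ Submodule.span K ((fun j ↦ f (a i ^ j)) '' Set.Iio (n i)))
    (s : ι → ℕ) :
    f (∏ i, a i ^ s i) ∈
      Submodule.span K ((fun ℓ : ι → ℕ ↦ f (∏ i, a i ^ ℓ i)) '' {ℓ | ∀ i, ℓ i < n i}) := by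
  let I : Ideal A := { f.ker with smul_mem' := fun b c hc ↦ hf b c hc }
  let π : A →ₗ[K] A ⧸ I := (Ideal.Quotient.mkₐ K I).toLinearMap
  have hker : π.ker = f.ker := by
    ext c
    exact Ideal.Quotient.eq_zero_iff_mem
  have hpow (i : ι) :
      π (a i) ^ n i ∈ Submodule.span K ((fun j ↦ π (a i) ^ j) '' Set.Iio (n i)) := by
    have hi := ha i
    rw [← Set.image_image f, map_mem_span_image_iff, ← hker, ← map_mem_span_image_iff,
      Set.image_image] at hi
    simpa [π] using hi
  rw [← Set.image_image f, map_mem_span_image_iff, ← hker, ← map_mem_span_image_iff,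
    Set.image_image]
  simpa [π] using prod_pow_mem_span_of_pow_mem_span hpow s

theorem span_range_prod_pow_eq_top [Fintype ι] [CommSemiring K] [CommSemiring A] [Algebra K A]
    {a : ι → A} (ha : Algebra.adjoin K (Set.range a) = ⊤) :
    Submodule.span K (Set.range fun s : ι → ℕ ↦ ∏ i, a i ^ s i) = ⊤ := by
  have hclosure : (Submonoid.closure (Set.range a) : Set A) =
      Set.range fun s : ι → ℕ ↦ ∏ i, a i ^ s i := by
    ext c
    simp [Submonoid.mem_closure_range_iff_of_fintype, eq_comm]
  rw [← hclosure, ← Algebra.adjoin_eq_span, ha, Algebra.top_toSubmodule]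

theorem finite_range_of_map_prod_pow_mem_span [Fintype ι] [CommSemiring K] [CommSemiring A]
    [Algebra K A] [AddCommMonoid M] [Module K M] (f : A →ₗ[K] M) {a : ι → A}
    (ha : Algebra.adjoin K (Set.range a) = ⊤) {n : ι → ℕ}
    (hs : ∀ s : ι → ℕ, f (∏ i, a i ^ s i) ∈
      Submodule.span K ((fun ℓ : ι → ℕ ↦ f (∏ i, a i ^ ℓ i)) '' {ℓ | ∀ i, ℓ i < n i})) :
    Module.Finite K f.range := by
  have hrange : f.range =
      Submodule.span K ((fun ℓ : ι → ℕ ↦ f (∏ i, a i ^ ℓ i)) '' {ℓ | ∀ i, ℓ i < n i}) := by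
    apply le_antisymm
    · rw [LinearMap.range_eq_map, ← span_range_prod_pow_eq_top ha, Submodule.map_span,
        Submodule.span_le]
      rintro _ ⟨_, ⟨s, rfl⟩, rfl⟩
      exact hs s
    · refine Submodule.span_le.2 ?_
      rintro _ ⟨ℓ, -, rfl⟩
      exact LinearMap.mem_range_self f _
  have hfin : {ℓ : ι → ℕ | ∀ i, ℓ i < n i}.Finite := by
    simpa [Set.pi] using Set.Finite.pi' fun i ↦ Set.finite_Iio (n i)
  exact hrange ▸ Module.Finite.span_of_finite K (hfin.image _)

end Monomials

section CurrentAlgebra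

variable {K g A M : Type*} [CommRing K] [LieRing g] [LieAlgebra K g] [CommRing A] [Algebra K A]
  [AddCommGroup M] [Module K M] [LieRingModule (A ⊗[K] g) M] [LieModule K (A ⊗[K] g) M]

variable (K A M) in
/-- The action of the elements `b ⊗ z` of the current algebra on `M`, for a fixed `z`, as a linear
map in `b`. -/
def currentAction (z : g) : A →ₗ[K] Module.End K M :=
  (LieModule.toEnd K (A ⊗[K] g) M : A ⊗[K] g →ₗ[K] Module.End K M) ∘ₗ
    (TensorProduct.mk K A g).flip z

theorem lie_currentAction (z z' : g) (b c : A) :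
    ⁅currentAction K A M z b, currentAction K A M z' c⁆ = currentAction K A M ⁅z, z'⁆ (b * c) :=
  LinearMap.ext fun v ↦ sub_eq_iff_eq_add.2 (leibniz_lie (b ⊗ₜ[K] z) (c ⊗ₜ[K] z') v)

theorem currentAction_smul (t : K) (z : g) : currentAction K A M (t • z) =
    t • currentAction K A M z := by
  simp [currentAction, LinearMap.comp_smul]

variable {x y h : g} {w : M} {ψ : A → K}

theorem pow_tmul_lie_mem_span (hhy : ⁅h, y⁆ = (-2 : K) • y) (hxy : ⁅x, y⁆ = h)
    (hxw : ∀ b : A, ⁅b ⊗ₜ[K] x, w⁆ = 0) (hhw : ∀ b : A, ⁅b ⊗ₜ[K] h, w⁆ = ψ b • w) {n : ℕ}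
    (hn : IsUnit ((n + 1).factorial : K))
    (hyw : (fun v ↦ ⁅(1 : A) ⊗ₜ[K] y, v⁆)^[n + 1] w = 0) (b : A) :
    ⁅(b ^ n) ⊗ₜ[K] y, w⁆ ∈ Submodule.span K ((fun j ↦ ⁅(b ^ j) ⊗ₜ[K] y, w⁆) '' Set.Iio n) := by
  refine lower_mem_span_of_lower_pow_eq_zero (x := currentAction K A M x b)
    (h := fun k ↦ currentAction K A M h (b ^ k)) (y := fun e ↦ currentAction K A M y (b ^ e))
    (hxw b) (fun k ↦ hhw (b ^ k)) (fun k e ↦ ?_) (fun e ↦ ?_) hn ?_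
  · rw [lie_currentAction, hhy, currentAction_smul, LinearMap.smul_apply, pow_add]
  · rw [lie_currentAction, hxy, pow_succ']
  · rw [pow_zero, Module.End.pow_apply]
    exact hyw

theorem mul_tmul_lie_eq_zero (h2 : IsUnit (2 : K)) (hhy : ⁅h, y⁆ = (-2 : K) • y)
    (hhw : ∀ b : A, ⁅b ⊗ₜ[K] h, w⁆ = ψ b • w) (b c : A) (hc : ⁅c ⊗ₜ[K] y, w⁆ = 0) :
    ⁅(b * c) ⊗ₜ[K] y, w⁆ = 0 := by
  have hlie := leibniz_lie (b ⊗ₜ[K] h) (c ⊗ₜ[K] y) w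
  rw [LieAlgebra.ExtendScalars.bracket_tmul, hhy, hhw, lie_smul, hc, smul_zero, lie_zero, add_zero,
    TensorProduct.tmul_smul, smul_lie, neg_smul, zero_eq_neg] at hlie
  exact h2.smul_eq_zero.1 hlie

theorem current_algebra_lowering_span_general {ι : Type*} [Fintype ι] (h2 : IsUnit (2 : K))
    (hy2 : ⁅h, y⁆ = (-2 : K) • y) (hxy : ⁅x, y⁆ = h)
    {a : ι → A} (hgen : Algebra.adjoin K (Set.range a) = ⊤)
    (hxw : ∀ b : A, ⁅b ⊗ₜ[K] x, w⁆ = 0) (hhw : ∀ b : A, ⁅b ⊗ₜ[K] h, w⁆ = ψ b • w)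
    {N : ℕ} (hN : IsUnit ((N + 1).factorial : K))
    (hyw : (fun v ↦ ⁅(1 : A) ⊗ₜ[K] y, v⁆)^[N + 1] w = 0) :
    (∀ s : ι → ℕ, ⁅(∏ i, a i ^ s i) ⊗ₜ[K] y, w⁆ ∈ Submodule.span K
        {v : M | ∃ ℓ : ι → ℕ, (∀ i, ℓ i < N) ∧ v = ⁅(∏ i, a i ^ ℓ i) ⊗ₜ[K] y, w⁆})
      ∧ Module.Finite K (Submodule.span K {v : M | ∃ b : A, v = ⁅b ⊗ₜ[K] y, w⁆}) := by
  let f : A →ₗ[K] M := (currentAction K A M y).flip w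
  have hmonomial := map_prod_pow_mem_span f (mul_tmul_lie_eq_zero h2 hy2 hhw) fun i ↦
    pow_tmul_lie_mem_span hy2 hxy hxw hhw hN hyw (a i)
  have hfinite := finite_range_of_map_prod_pow_mem_span f hgen hmonomial
  have hbox : (fun ℓ : ι → ℕ ↦ f (∏ i, a i ^ ℓ i)) '' {ℓ | ∀ i, ℓ i < N} =
      {v | ∃ ℓ : ι → ℕ, (∀ i, ℓ i < N) ∧ v = ⁅(∏ i, a i ^ ℓ i) ⊗ₜ[K] y, w⁆} := by
    simp only [Set.image, eq_comm]
    rfl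
  have hspan : f.range = Submodule.span K {v | ∃ b : A, v = ⁅b ⊗ₜ[K] y, w⁆} := by
    rw [← Submodule.span_eq f.range]
    simp only [LinearMap.coe_range, Set.range, eq_comm]
    rfl
  exact ⟨hbox ▸ hmonomial, hspan ▸ hfinite⟩

end CurrentAlgebra

/-- Let `(x, y, h)` be an sl₂-triple in `g`, `A` a commutative associative
unital ℂ-algebra generated by `a₁, …, a_m`, and `M` a module over the current algebra
`g ⊗ A`.  If `(x ⊗ a) • w = 0` and `(h ⊗ a) • w = ψ(a)·w` for all `a ∈ A`, `ψ(1) = N ∈ ℕ`,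
and `(y ⊗ 1)^{N+1} • w = 0`, then `(y ⊗ a₁^{s₁}⋯a_m^{s_m}) • w` lies in
`span_ℂ{(y ⊗ a₁^{ℓ₁}⋯a_m^{ℓ_m}) • w : 0 ≤ ℓᵢ < N}`; in particular
`span_ℂ{(y ⊗ a) • w : a ∈ A}` is finite dimensional. -/
theorem current_algebra_lowering_span
    {g A M : Type*} [LieRing g] [LieAlgebra ℂ g] [CommRing A] [Algebra ℂ A]
    [AddCommGroup M] [Module ℂ M] [LieRingModule (A ⊗[ℂ] g) M]
    [LieModule ℂ (A ⊗[ℂ] g) M]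
    (x y h : g)
    (hx2 : ⁅h, x⁆ = (2 : ℂ) • x) (hy2 : ⁅h, y⁆ = (-2 : ℂ) • y) (hxy : ⁅x, y⁆ = h)
    (m : ℕ) (a : Fin m → A) (hgen : Algebra.adjoin ℂ (Set.range a) = ⊤)
    (w : M) (ψ : A →ₗ[ℂ] ℂ)
    (hxw : ∀ b : A, ⁅b ⊗ₜ[ℂ] x, w⁆ = 0)
    (hhw : ∀ b : A, ⁅b ⊗ₜ[ℂ] h, w⁆ = ψ b • w)
    (N : ℕ) (hN : ψ 1 = (N : ℂ))
    (hyw : (fun v => ⁅(1 : A) ⊗ₜ[ℂ] y, v⁆)^[N + 1] w = 0) :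
    (∀ s : Fin m → ℕ,
        ⁅(∏ i, a i ^ s i) ⊗ₜ[ℂ] y, w⁆ ∈ Submodule.span ℂ
          {v : M | ∃ ℓ : Fin m → ℕ, (∀ i, ℓ i < N) ∧
            v = ⁅(∏ i, a i ^ ℓ i) ⊗ₜ[ℂ] y, w⁆})
      ∧ FiniteDimensional ℂ
          ↥(Submodule.span ℂ {v : M | ∃ b : A, v = ⁅b ⊗ₜ[ℂ] y, w⁆}) := by
  exact current_algebra_lowering_span_general two_ne_zero.isUnit hy2 hxy hgen hxw hhw
    (Nat.cast_ne_zero.2 (N + 1).factorial_ne_zero).isUnit hyw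
end

section
/- Let V be a finite-dimensional vector space over ℂ and Q a quadratic form on V. Then any two simple modules over the Clifford algebra Cliff(V, Q) are finite dimensional and have the same dimension over ℂ. -/
/-!
Let `V` act on a simple Clifford module `M`. If `e`, `f` are isotropic with `polar Q e f = 1`, then
`e f + f e = 1` on `M`, so `M` is the direct sum of `ker e` and `f (ker e)`, two copies of `ker e`.
The kernel is again simple for the form restricted to `{e, f}ᗮ`, whose polar form has rank two less.
When no such pair is left, every isotropic vector lies in the radical and acts by zero. Over a field
in which quadratic equations are solvable, every vector differs from a multiple of one fixed `w` by
an isotropic one; so `w` commutes with the whole action, it is a scalar because its square is,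
and `dim M = 1`. Hence `dim M = 2 ^ ⌊r / 2⌋`, where `r` is the rank of the polar form.
-/

open QuadraticMap

/-- The isomorphism `f v ↦ g v` between the ranges of two linear maps with the same kernel, the
second of which is surjective. -/
noncomputable def rangeEquivOfKerEq {R V A B : Type*} [Ring R] [AddCommGroup V] [AddCommGroup A]
    [AddCommGroup B] [Module R V] [Module R A] [Module R B] {f : V →ₗ[R] A} {g : V →ₗ[R] B}
    (h : LinearMap.ker f = LinearMap.ker g) (hg : Function.Surjective g) :
    LinearMap.range f ≃ₗ[R] B :=
  f.quotKerEquivRange.symm ≪≫ₗ Submodule.quotEquivOfEq _ _ h ≪≫ₗ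
    g.quotKerEquivOfSurjective hg

section HyperbolicPair

variable {R V : Type*} [CommRing R] [AddCommGroup V] [Module R V]

/-- Two isotropic vectors spanning a hyperbolic plane. The pairing is normalised through the polar
form, so that the notion is meaningful in characteristic two. -/
structure IsHyperbolicPair (Q : QuadraticForm R V) (e f : V) : Prop where
  left : Q e = 0
  right : Q f = 0
  polar_eq_one : polar Q e f = 1

/-- The orthogonal complement of `{e, f}` with respect to the polar form of `Q`. -/
def perpPair (Q : QuadraticForm R V) (e f : V) : Submodule R V :=
  LinearMap.ker (Q.polarBilin e) ⊓ LinearMap.ker (Q.polarBilin f)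

variable {Q : QuadraticForm R V} {e f : V}

theorem mem_perpPair {v : V} : v ∈ perpPair Q e f ↔ polar Q e v = 0 ∧ polar Q f v = 0 :=
  Iff.rfl

theorem polar_self_eq_zero (he : Q e = 0) : polar Q e e = 0 := by
  rw [polar_self, he, smul_zero]

theorem isHyperbolicPair_sub_smul {v : V} (he : Q e = 0) (hv : polar Q e v = 1) :
    IsHyperbolicPair Q e (v - Q v • e) where
  left := he
  right := by
    rw [sub_eq_add_neg, ← neg_smul, QuadraticMap.map_add Q, QuadraticMap.map_smul,
      polar_smul_right, polar_comm, hv, he]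
    simp
  polar_eq_one := by
    rw [polar_sub_right, polar_smul_right, polar_self_eq_zero he, hv, smul_zero, sub_zero]

theorem exists_isHyperbolicPair {K V : Type*} [Field K] [AddCommGroup V] [Module K V]
    {Q : QuadraticForm K V} {e : V} (he : Q e = 0) (he' : Q.polarBilin e ≠ 0) :
    ∃ f, IsHyperbolicPair Q e f := by
  obtain ⟨v, hv⟩ := DFunLike.ne_iff.mp he'
  refine ⟨_, isHyperbolicPair_sub_smul (v := (polar Q e v)⁻¹ • v) he ?_⟩
  rw [polar_smul_right, smul_eq_mul]
  exact inv_mul_cancel₀ hv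

namespace IsHyperbolicPair

theorem symm (h : IsHyperbolicPair Q e f) : IsHyperbolicPair Q f e where
  left := h.right
  right := h.left
  polar_eq_one := by rw [polar_comm, h.polar_eq_one]

theorem sub_smul_sub_smul_mem_perpPair (h : IsHyperbolicPair Q e f) (v : V) :
    v - polar Q f v • e - polar Q e v • f ∈ perpPair Q e f := by
  simp [mem_perpPair, polar_sub_right, polar_smul_right, polar_self_eq_zero h.left,
    polar_self_eq_zero h.right, h.polar_eq_one, h.symm.polar_eq_one]

/-- The orthogonal projection of `V` onto `perpPair Q e f`. -/
def proj (h : IsHyperbolicPair Q e f) : V →ₗ[R] perpPair Q e f :=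
  LinearMap.codRestrict _
    (LinearMap.id - (Q.polarBilin f).smulRight e - (Q.polarBilin e).smulRight f)
    h.sub_smul_sub_smul_mem_perpPair

theorem coe_proj (h : IsHyperbolicPair Q e f) (v : V) :
    (h.proj v : V) = v - polar Q f v • e - polar Q e v • f :=
  rfl

theorem proj_add_smul_add_smul (h : IsHyperbolicPair Q e f) (v : V) :
    (h.proj v : V) + polar Q f v • e + polar Q e v • f = v := by
  rw [coe_proj]
  abel

theorem polar_eq (h : IsHyperbolicPair Q e f) (v x : V) :
    polar Q v x = polar (Q.restrict (perpPair Q e f)) (h.proj v) (h.proj x) +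
      polar Q e v * polar Q f x + polar Q f v * polar Q e x := by
  change _ = polar Q (h.proj v : V) (h.proj x : V) + _ + _
  simp only [coe_proj, polar_sub_left, polar_sub_right, polar_smul_left, polar_smul_right,
    polar_self_eq_zero h.left, polar_self_eq_zero h.right, h.polar_eq_one, h.symm.polar_eq_one,
    polar_comm Q v e, polar_comm Q v f, smul_eq_mul]
  ring

/-- The coordinates of `v` modulo the radical of `Q`: the functional on `perpPair Q e f` that its
projection represents, and its pairings with `e` and `f`. -/
def coords (h : IsHyperbolicPair Q e f) :
    V →ₗ[R] LinearMap.range (Q.restrict (perpPair Q e f)).polarBilin × R × R :=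
  ((Q.restrict (perpPair Q e f)).polarBilin.rangeRestrict ∘ₗ h.proj).prod
    ((Q.polarBilin e).prod (Q.polarBilin f))

theorem ker_coords (h : IsHyperbolicPair Q e f) :
    LinearMap.ker h.coords = LinearMap.ker Q.polarBilin := by
  ext v
  simp only [coords, LinearMap.ker_prod, Submodule.mem_inf, LinearMap.mem_ker,
    LinearMap.comp_apply, polarBilin_apply_apply]
  constructor
  · rintro ⟨hv, he, hf⟩
    have hv' := LinearMap.congr_fun (congrArg Subtype.val hv)
    ext x
    rw [polarBilin_apply_apply, h.polar_eq, he, hf, zero_mul, zero_mul, add_zero, add_zero]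
    exact hv' (h.proj x)
  · intro hv
    have hv' (x : V) : polar Q v x = 0 := LinearMap.congr_fun hv x
    have he : polar Q e v = 0 := by rw [polar_comm, hv']
    have hf : polar Q f v = 0 := by rw [polar_comm, hv']
    refine ⟨Subtype.ext (LinearMap.ext fun x => ?_), he, hf⟩
    change polar Q (h.proj v : V) x = 0
    rw [coe_proj, he, hf, zero_smul, zero_smul, sub_zero, sub_zero, hv']

theorem coords_surjective (h : IsHyperbolicPair Q e f) : Function.Surjective h.coords := by
  rintro ⟨⟨_, w, rfl⟩, a, b⟩
  have he : polar Q e (w + b • e + a • f) = a := by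
    simp [polar_add_right, polar_smul_right, mem_perpPair.mp w.2, polar_self_eq_zero h.left,
      h.polar_eq_one]
  have hf : polar Q f (w + b • e + a • f) = b := by
    simp [polar_add_right, polar_smul_right, mem_perpPair.mp w.2, polar_self_eq_zero h.right,
      h.symm.polar_eq_one]
  have hproj : h.proj (w + b • e + a • f) = w := by
    ext
    rw [coe_proj, he, hf]
    abel
  refine ⟨w + b • e + a • f, Prod.ext (Subtype.ext ?_) (Prod.ext he hf)⟩
  exact congrArg (Q.restrict (perpPair Q e f)).polarBilin hproj

/-- Splitting off a hyperbolic plane removes two dimensions from the range of the polar form. -/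
noncomputable def rangePolarBilinEquiv (h : IsHyperbolicPair Q e f) :
    LinearMap.range Q.polarBilin ≃ₗ[R]
      LinearMap.range (Q.restrict (perpPair Q e f)).polarBilin × R × R :=
  rangeEquivOfKerEq (B := LinearMap.range (Q.restrict (perpPair Q e f)).polarBilin × R × R)
    h.ker_coords.symm h.coords_surjective

theorem finite_range_polarBilin_restrict [Module.Finite R (LinearMap.range Q.polarBilin)]
    (h : IsHyperbolicPair Q e f) :
    Module.Finite R (LinearMap.range (Q.restrict (perpPair Q e f)).polarBilin) := by
  have := Module.Finite.equiv h.rangePolarBilinEquiv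
  exact Module.Finite.of_surjective
    (LinearMap.fst R (LinearMap.range (Q.restrict (perpPair Q e f)).polarBilin) (R × R))
    LinearMap.fst_surjective

end IsHyperbolicPair

end HyperbolicPair

section CliffordAction

variable {R V M : Type*} [CommRing R] [AddCommGroup V] [Module R V] [AddCommGroup M] [Module R M]

/-- A linear action of `V` on `M` satisfying the Clifford relation `v ^ 2 = Q v`, that is, a module
over the Clifford algebra of `Q` given by the action of its generators. -/
structure IsCliffordAction (Q : QuadraticForm R V) (ρ : V →ₗ[R] Module.End R M) : Prop where
  apply_apply_self : ∀ v m, ρ v (ρ v m) = Q v • m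

/-- A Clifford action on a nonzero module without proper nonzero invariant submodules: the
counterpart of a simple module over the Clifford algebra. -/
structure IsIrreducibleCliffordAction (Q : QuadraticForm R V) (ρ : V →ₗ[R] Module.End R M) : Prop
    extends IsCliffordAction Q ρ where
  nontrivial : Nontrivial M
  eq_bot_or_eq_top : ∀ W : Submodule R M, (∀ v, ∀ m ∈ W, ρ v m ∈ W) → W = ⊥ ∨ W = ⊤

variable {Q : QuadraticForm R V} {ρ : V →ₗ[R] Module.End R M} {e f : V}

namespace IsCliffordAction

theorem apply_apply_add_swap (h : IsCliffordAction Q ρ) (v w : V) (m : M) :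
    ρ v (ρ w m) + ρ w (ρ v m) = polar Q v w • m := by
  have hvw := h.apply_apply_self (v + w) m
  simp only [map_add, LinearMap.add_apply, h.apply_apply_self] at hvw
  rw [polar, sub_smul, sub_smul, ← hvw]
  abel

theorem apply_apply_eq_neg_swap (h : IsCliffordAction Q ρ) {v w : V} (hvw : polar Q v w = 0)
    (m : M) : ρ v (ρ w m) = -ρ w (ρ v m) := by
  rw [eq_neg_iff_add_eq_zero, h.apply_apply_add_swap, hvw, zero_smul]

theorem apply_apply_eq_zero (h : IsCliffordAction Q ρ) (he : Q e = 0) (m : M) :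
    ρ e (ρ e m) = 0 := by
  rw [h.apply_apply_self, he, zero_smul]

theorem apply_apply_eq_sub (h : IsCliffordAction Q ρ) (hef : IsHyperbolicPair Q e f) (m : M) :
    ρ e (ρ f m) = m - ρ f (ρ e m) := by
  rw [eq_sub_iff_add_eq, h.apply_apply_add_swap, hef.polar_eq_one, one_smul]

theorem nontrivial_ker [Nontrivial M] (h : IsCliffordAction Q ρ) (he : Q e = 0) :
    Nontrivial (LinearMap.ker (ρ e)) := by
  rw [Submodule.nontrivial_iff_ne_bot]
  intro hker
  obtain ⟨m, hm⟩ := exists_ne (0 : M)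
  have hinj : Function.Injective (ρ e) := LinearMap.ker_eq_bot.mp hker
  exact hm (hinj (hinj (by rw [h.apply_apply_eq_zero he, map_zero, map_zero])))

/-- The action of the orthogonal complement of `{e, f}` on the kernel of `e`. -/
def kerAction (h : IsCliffordAction Q ρ) (e f : V) :
    perpPair Q e f →ₗ[R] Module.End R (LinearMap.ker (ρ e)) where
  toFun v := (ρ v).restrict fun m hm => by
    rw [LinearMap.mem_ker] at hm ⊢
    rw [h.apply_apply_eq_neg_swap v.2.1, hm, map_zero, neg_zero]
  map_add' a b := by ext; simp
  map_smul' c a := by ext; simp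

theorem coe_kerAction_apply (h : IsCliffordAction Q ρ) (v : perpPair Q e f)
    (m : LinearMap.ker (ρ e)) : (h.kerAction e f v m : M) = ρ v m :=
  rfl

theorem isCliffordAction_kerAction (h : IsCliffordAction Q ρ) (e f : V) :
    IsCliffordAction (Q.restrict (perpPair Q e f)) (h.kerAction e f) where
  apply_apply_self v m := Subtype.ext (h.apply_apply_self v m)

/-- The decomposition `M = ker e ⊕ f (ker e)` attached to a hyperbolic pair. -/
def kerProdKerEquiv (h : IsCliffordAction Q ρ) (hef : IsHyperbolicPair Q e f) :
    (LinearMap.ker (ρ e) × LinearMap.ker (ρ e)) ≃ₗ[R] M where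
  toFun p := p.1 + ρ f p.2
  map_add' p q := by
    simp only [Prod.fst_add, Prod.snd_add, Submodule.coe_add, map_add]
    abel
  map_smul' c p := by simp
  invFun m := (⟨ρ e (ρ f m), h.apply_apply_eq_zero hef.left _⟩,
    ⟨ρ e m, h.apply_apply_eq_zero hef.left _⟩)
  left_inv := by
    rintro ⟨⟨x, hx⟩, ⟨y, hy⟩⟩
    rw [LinearMap.mem_ker] at hx hy
    ext
    · simp [h.apply_apply_eq_sub hef, h.apply_apply_eq_zero hef.right, hx]
    · simp [h.apply_apply_eq_sub hef, hx, hy]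
  right_inv m := by simp [h.apply_apply_eq_sub hef]

theorem apply_mem_map_kerProdKerEquiv (h : IsCliffordAction Q ρ) (hef : IsHyperbolicPair Q e f)
    {W : Submodule R (LinearMap.ker (ρ e))} (hW : ∀ v, ∀ m ∈ W, h.kerAction e f v m ∈ W)
    (v : V) {m : M} (hm : m ∈ (W.prod W).map (h.kerProdKerEquiv hef).toLinearMap) :
    ρ v m ∈ (W.prod W).map (h.kerProdKerEquiv hef).toLinearMap := by
  set U := (W.prod W).map (h.kerProdKerEquiv hef).toLinearMap
  obtain ⟨⟨x, y⟩, ⟨hx, hy⟩, rfl⟩ := hm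
  have mem_U {a b : LinearMap.ker (ρ e)} (ha : a ∈ W) (hb : b ∈ W) : (a : M) + ρ f b ∈ U :=
    ⟨(a, b), ⟨ha, hb⟩, rfl⟩
  have he : ρ e (x + ρ f y) ∈ U := by
    have key : ρ e (x + ρ f y) = y + ρ f (0 : LinearMap.ker (ρ e)) := by
      simp [h.apply_apply_eq_sub hef]
    exact key ▸ mem_U hy W.zero_mem
  have hf : ρ f (x + ρ f y) ∈ U := by
    have key : ρ f (x + ρ f y) = (0 : LinearMap.ker (ρ e)) + ρ f x := by
      simp [h.apply_apply_eq_zero hef.right]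
    exact key ▸ mem_U W.zero_mem hx
  have hperp (u : perpPair Q e f) : ρ u (x + ρ f y) ∈ U := by
    have key : ρ u (x + ρ f y) =
        h.kerAction e f u x + ρ f (-h.kerAction e f u y : LinearMap.ker (ρ e)) := by
      simp [coe_kerAction_apply, h.apply_apply_eq_neg_swap u.2.2]
    exact key ▸ mem_U (hW u x hx) (W.neg_mem (hW u y hy))
  rw [← hef.proj_add_smul_add_smul v]
  simp only [map_add, map_smul, LinearMap.add_apply, LinearMap.smul_apply]
  exact U.add_mem (U.add_mem (hperp _) (U.smul_mem _ he)) (U.smul_mem _ hf)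

end IsCliffordAction

namespace IsIrreducibleCliffordAction

theorem kerAction (h : IsIrreducibleCliffordAction Q ρ) (hef : IsHyperbolicPair Q e f) :
    IsIrreducibleCliffordAction (Q.restrict (perpPair Q e f))
      (h.toIsCliffordAction.kerAction e f) where
  toIsCliffordAction := h.isCliffordAction_kerAction e f
  nontrivial := have := h.nontrivial; h.nontrivial_ker hef.left
  eq_bot_or_eq_top W hW := by
    have hU := h.eq_bot_or_eq_top _ fun v _ hm => h.apply_mem_map_kerProdKerEquiv hef hW v hm
    simpa [Submodule.prod_eq_bot_iff, Submodule.prod_eq_top_iff] using hU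

theorem eq_zero_or_eq_zero_of_mul_eq_zero (h : IsIrreducibleCliffordAction Q ρ)
    {S T : Module.End R M} (hS : ∀ v m, S m = 0 → S (ρ v m) = 0) (hST : S * T = 0) :
    S = 0 ∨ T = 0 := by
  rcases h.eq_bot_or_eq_top (LinearMap.ker S) hS with hker | hker
  · exact .inr (LinearMap.ext fun m =>
      LinearMap.ker_eq_bot'.mp hker _ (LinearMap.congr_fun hST m))
  · exact .inl (LinearMap.ker_eq_top.mp hker)

theorem apply_eq_zero_of_polarBilin_eq_zero (h : IsIrreducibleCliffordAction Q ρ) (he : Q e = 0)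
    (he' : Q.polarBilin e = 0) : ρ e = 0 := by
  refine or_self_iff.mp (h.eq_zero_or_eq_zero_of_mul_eq_zero (fun v m hm => ?_)
    (LinearMap.ext (h.apply_apply_eq_zero he)))
  rw [h.apply_apply_eq_neg_swap (LinearMap.congr_fun he' v), hm, map_zero, neg_zero]

theorem exists_eq_algebraMap_of_mul_self (h : IsIrreducibleCliffordAction Q ρ)
    {T : Module.End R M} (hT : ∀ v, Commute T (ρ v)) {s : R}
    (hs : T * T = algebraMap R (Module.End R M) (s * s)) :
    ∃ c : R, T = algebraMap R (Module.End R M) c := by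
  have hcomm : Commute T (algebraMap R _ s) := (Algebra.commutes s T).symm
  have hmul : (T - algebraMap R _ s) * (T + algebraMap R _ s) = 0 := by
    rw [← hcomm.mul_self_sub_mul_self_eq', hs, map_mul, sub_self]
  have hker (v : V) (m : M) (hm : (T - algebraMap R _ s) m = 0) :
      (T - algebraMap R _ s) (ρ v m) = 0 := by
    have hv := (hT v).sub_left (Algebra.commutes s (ρ v))
    rw [← Module.End.mul_apply, hv.eq, Module.End.mul_apply, hm, map_zero]
  rcases h.eq_zero_or_eq_zero_of_mul_eq_zero hker hmul with hT | hT
  · exact ⟨s, sub_eq_zero.mp hT⟩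
  · exact ⟨-s, by rw [map_neg, eq_neg_of_add_eq_zero_left hT]⟩

end IsIrreducibleCliffordAction

end CliffordAction

section Field

/-- A field, of any characteristic, over which every quadratic polynomial has a root. -/
class IsQuadraticallyClosed (K : Type*) [Field K] : Prop where
  exists_mul_self_add_mul_add_eq_zero : ∀ b c : K, ∃ t : K, t * t + b * t + c = 0

instance isQuadraticallyClosed_of_isAlgClosed (K : Type*) [Field K] [IsAlgClosed K] :
    IsQuadraticallyClosed K where
  exists_mul_self_add_mul_add_eq_zero b c := by
    have hdeg := Polynomial.degree_quadratic (b := b) (c := c) (one_ne_zero (α := K))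
    obtain ⟨t, ht⟩ := IsAlgClosed.exists_root _ (by rw [hdeg]; exact two_ne_zero)
    exact ⟨t, by simpa [Polynomial.IsRoot, pow_two] using ht⟩

variable {K V M : Type*} [Field K] [AddCommGroup V] [Module K V] [AddCommGroup M] [Module K M]
  {Q : QuadraticForm K V} {ρ : V →ₗ[K] Module.End K M}

theorem IsHyperbolicPair.finrank_range_polarBilin
    [FiniteDimensional K (LinearMap.range Q.polarBilin)] {e f : V} (h : IsHyperbolicPair Q e f) :
    Module.finrank K (LinearMap.range Q.polarBilin) =
      Module.finrank K (LinearMap.range (Q.restrict (perpPair Q e f)).polarBilin) + 2 := by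
  have := h.finite_range_polarBilin_restrict
  have := Module.Free.of_divisionRing K
    (LinearMap.range (Q.restrict (perpPair Q e f)).polarBilin)
  rw [h.rangePolarBilinEquiv.finrank_eq, Module.finrank_prod, Module.finrank_prod,
    Module.finrank_self]

theorem exists_forall_exists_map_sub_smul_eq_zero [IsQuadraticallyClosed K]
    (Q : QuadraticForm K V) :
    ∃ w, ∀ v, ∃ t : K, Q (v - t • w) = 0 := by
  by_cases hQ : ∀ v, Q v = 0
  · exact ⟨0, fun v => ⟨0, hQ _⟩⟩
  push Not at hQ
  obtain ⟨w, hw⟩ := hQ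
  refine ⟨w, fun v => ?_⟩
  obtain ⟨t, ht⟩ := IsQuadraticallyClosed.exists_mul_self_add_mul_add_eq_zero
    (-(polar Q v w / Q w)) (Q v / Q w)
  refine ⟨t, ?_⟩
  calc
    Q (v - t • w) = Q w * (t * t + -(polar Q v w / Q w) * t + Q v / Q w) := by
      rw [sub_eq_add_neg, ← neg_smul, QuadraticMap.map_add Q, QuadraticMap.map_smul,
        polar_smul_right, smul_eq_mul, smul_eq_mul]
      field_simp
      ring
    _ = 0 := by rw [ht, mul_zero]

theorem finrank_range_polarBilin_le_one [IsQuadraticallyClosed K]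
    (hQ : ∀ e, Q e = 0 → Q.polarBilin e = 0) :
    Module.finrank K (LinearMap.range Q.polarBilin) ≤ 1 := by
  obtain ⟨w, hw⟩ := exists_forall_exists_map_sub_smul_eq_zero Q
  refine finrank_le_one (Q.polarBilin.rangeRestrict w) ?_
  rintro ⟨_, v, rfl⟩
  obtain ⟨t, ht⟩ := hw v
  refine ⟨t, Subtype.ext ?_⟩
  have hv := hQ _ ht
  rw [map_sub, map_smul, sub_eq_zero] at hv
  exact hv.symm

namespace IsIrreducibleCliffordAction

theorem exists_forall_exists_apply_eq_smul [IsQuadraticallyClosed K]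
    (h : IsIrreducibleCliffordAction Q ρ) (hQ : ∀ e, Q e = 0 → Q.polarBilin e = 0) :
    ∃ w, ∀ v, ∃ t : K, ρ v = t • ρ w := by
  obtain ⟨w, hw⟩ := exists_forall_exists_map_sub_smul_eq_zero Q
  refine ⟨w, fun v => ?_⟩
  obtain ⟨t, ht⟩ := hw v
  have hv := h.apply_eq_zero_of_polarBilin_eq_zero ht (hQ _ ht)
  rw [map_sub, map_smul, sub_eq_zero] at hv
  exact ⟨t, hv⟩

theorem exists_apply_eq_algebraMap [IsQuadraticallyClosed K]
    (h : IsIrreducibleCliffordAction Q ρ) (hQ : ∀ e, Q e = 0 → Q.polarBilin e = 0) (v : V) :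
    ∃ c : K, ρ v = algebraMap K (Module.End K M) c := by
  obtain ⟨w, hw⟩ := h.exists_forall_exists_apply_eq_smul hQ
  have hcomm (u : V) : Commute (ρ w) (ρ u) := by
    obtain ⟨t, ht⟩ := hw u
    exact ht ▸ (Commute.refl (ρ w)).smul_right t
  obtain ⟨s, hs⟩ := IsQuadraticallyClosed.exists_mul_self_add_mul_add_eq_zero 0 (-Q w)
  have hsq : ρ w * ρ w = algebraMap K _ (s * s) := by
    have hsw : s * s = Q w := by linear_combination hs
    exact LinearMap.ext fun m => by rw [hsw]; exact h.apply_apply_self w m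
  obtain ⟨c, hc⟩ := h.exists_eq_algebraMap_of_mul_self hcomm hsq
  obtain ⟨t, ht⟩ := hw v
  exact ⟨t * c, by rw [ht, hc, map_mul, ← Algebra.smul_def]⟩

theorem finrank_eq_one [IsQuadraticallyClosed K]
    (h : IsIrreducibleCliffordAction Q ρ) (hQ : ∀ e, Q e = 0 → Q.polarBilin e = 0) :
    Module.finrank K M = 1 := by
  have := h.nontrivial
  have : IsSimpleModule K M :=
    { eq_bot_or_eq_top := fun W => h.eq_bot_or_eq_top W fun v m hm => by
        obtain ⟨c, hc⟩ := h.exists_apply_eq_algebraMap hQ v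
        rw [hc]
        exact W.smul_mem c hm }
  exact isSimpleModule_iff_finrank_eq_one.mp this

theorem finrank_eq_two_pow [IsQuadraticallyClosed K]
    [FiniteDimensional K (LinearMap.range Q.polarBilin)] (h : IsIrreducibleCliffordAction Q ρ) :
    Module.finrank K M = 2 ^ (Module.finrank K (LinearMap.range Q.polarBilin) / 2) := by
  induction hr : Module.finrank K (LinearMap.range Q.polarBilin) using Nat.strong_induction_on
    generalizing V M with
  | _ r ih =>
    by_cases hQ : ∀ e, Q e = 0 → Q.polarBilin e = 0
    · have hr1 : r < 2 := hr ▸ Nat.lt_succ_of_le (finrank_range_polarBilin_le_one hQ)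
      rw [h.finrank_eq_one hQ, Nat.div_eq_of_lt hr1, pow_zero]
    · push Not at hQ
      obtain ⟨e, he, he'⟩ := hQ
      obtain ⟨f, hef⟩ := exists_isHyperbolicPair he he'
      have := hef.finite_range_polarBilin_restrict
      have hrank := hef.finrank_range_polarBilin
      have hker := ih _ (by omega) (h.kerAction hef) rfl
      have : FiniteDimensional K (LinearMap.ker (ρ e)) :=
        Module.finite_of_finrank_pos (hker ▸ Nat.two_pow_pos _)
      rw [← (h.kerProdKerEquiv hef).finrank_eq, Module.finrank_prod, hker, ← hr, hrank,
        Nat.add_div_right _ two_pos, pow_succ, mul_two]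

end IsIrreducibleCliffordAction

end Field

section CliffordModule

variable {R V : Type*} [CommRing R] [AddCommGroup V] [Module R V] (Q : QuadraticForm R V)
  (M : Type*) [AddCommGroup M] [Module R M] [Module (CliffordAlgebra Q) M]
  [IsScalarTower R (CliffordAlgebra Q) M]

/-- The action of the generators of the Clifford algebra on one of its modules. -/
def cliffordAction : V →ₗ[R] Module.End R M :=
  (Algebra.lsmul R R M : CliffordAlgebra Q →ₐ[R] Module.End R M).toLinearMap ∘ₗ
    CliffordAlgebra.ι Q

theorem cliffordAction_apply (v : V) (m : M) : cliffordAction Q M v m = CliffordAlgebra.ι Q v • m :=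
  rfl

variable {Q M}

theorem smul_mem_of_forall_ι_smul_mem {W : Submodule R M}
    (hW : ∀ v, ∀ m ∈ W, CliffordAlgebra.ι Q v • m ∈ W) (a : CliffordAlgebra Q) {m : M}
    (hm : m ∈ W) : a • m ∈ W := by
  induction a using CliffordAlgebra.induction generalizing m with
  | algebraMap r => rw [algebraMap_smul]; exact W.smul_mem r hm
  | ι v => exact hW v m hm
  | mul a b ha hb => rw [mul_smul]; exact ha (hb hm)
  | add a b ha hb => rw [add_smul]; exact W.add_mem (ha hm) (hb hm)

variable (Q M) in
theorem isIrreducibleCliffordAction_cliffordAction [IsSimpleModule (CliffordAlgebra Q) M] :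
    IsIrreducibleCliffordAction Q (cliffordAction Q M) where
  apply_apply_self v m := by
    rw [cliffordAction_apply, cliffordAction_apply, smul_smul, CliffordAlgebra.ι_sq_scalar,
      algebraMap_smul]
  nontrivial := IsSimpleModule.nontrivial (CliffordAlgebra Q) M
  eq_bot_or_eq_top W hW := by
    let W' : Submodule (CliffordAlgebra Q) M :=
      { W with smul_mem' := fun a _ hm => smul_mem_of_forall_ι_smul_mem hW a hm }
    have hmem (m : M) : m ∈ W' ↔ m ∈ W := Iff.rfl
    refine (eq_bot_or_eq_top W').imp (fun h => ?_) (fun h => ?_) <;> ext m <;> simp [← hmem, h]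

end CliffordModule

section SimpleCliffordModule

variable {K V : Type*} [Field K] [IsQuadraticallyClosed K] [AddCommGroup V] [Module K V]
  (Q : QuadraticForm K V) [FiniteDimensional K (LinearMap.range Q.polarBilin)]

theorem finrank_of_isSimpleModule_cliffordAlgebra (M : Type*) [AddCommGroup M] [Module K M]
    [Module (CliffordAlgebra Q) M] [IsScalarTower K (CliffordAlgebra Q) M]
    [IsSimpleModule (CliffordAlgebra Q) M] :
    Module.finrank K M = 2 ^ (Module.finrank K (LinearMap.range Q.polarBilin) / 2) :=
  (isIrreducibleCliffordAction_cliffordAction Q M).finrank_eq_two_pow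

theorem finiteDimensional_of_isSimpleModule_cliffordAlgebra (M : Type*) [AddCommGroup M]
    [Module K M] [Module (CliffordAlgebra Q) M] [IsScalarTower K (CliffordAlgebra Q) M]
    [IsSimpleModule (CliffordAlgebra Q) M] : FiniteDimensional K M :=
  Module.finite_of_finrank_pos (finrank_of_isSimpleModule_cliffordAlgebra Q M ▸ Nat.two_pow_pos _)

theorem simple_clifford_modules_same_dimension_general
    (M N : Type*) [AddCommGroup M] [AddCommGroup N]
    [Module K M] [Module (CliffordAlgebra Q) M] [IsScalarTower K (CliffordAlgebra Q) M]
    [Module K N] [Module (CliffordAlgebra Q) N] [IsScalarTower K (CliffordAlgebra Q) N]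
    [IsSimpleModule (CliffordAlgebra Q) M] [IsSimpleModule (CliffordAlgebra Q) N] :
    FiniteDimensional K M ∧ FiniteDimensional K N ∧
      Module.finrank K M = Module.finrank K N :=
  ⟨finiteDimensional_of_isSimpleModule_cliffordAlgebra Q M,
    finiteDimensional_of_isSimpleModule_cliffordAlgebra Q N,
    (finrank_of_isSimpleModule_cliffordAlgebra Q M).trans
      (finrank_of_isSimpleModule_cliffordAlgebra Q N).symm⟩

end SimpleCliffordModule

/-- Over a finite-dimensional complex vector space `V` with quadratic form
`Q`, any two simple modules over the Clifford algebra `Cliff(V, Q)` are finite dimensional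
over ℂ and have the same ℂ-dimension. -/
theorem simple_clifford_modules_same_dimension
    {V : Type*} [AddCommGroup V] [Module ℂ V] [FiniteDimensional ℂ V]
    (Q : QuadraticForm ℂ V)
    (M N : Type*) [AddCommGroup M] [AddCommGroup N]
    [Module ℂ M] [Module (CliffordAlgebra Q) M] [IsScalarTower ℂ (CliffordAlgebra Q) M]
    [Module ℂ N] [Module (CliffordAlgebra Q) N] [IsScalarTower ℂ (CliffordAlgebra Q) N]
    [IsSimpleModule (CliffordAlgebra Q) M] [IsSimpleModule (CliffordAlgebra Q) N] :
    FiniteDimensional ℂ M ∧ FiniteDimensional ℂ N ∧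
      Module.finrank ℂ M = Module.finrank ℂ N :=
  simple_clifford_modules_same_dimension_general Q M N
end

section
/- Let g be a Lie algebra over ℂ, let u, h ∈ g and c ∈ ℂ with c ≠ 0 satisfy ⁅h, u⁆ = c·u, let A be a commutative associative unital ℂ-algebra, let M be a module over the current Lie algebra g ⊗ A, and let V ⊆ M be a ℂ-subspace such that (h ⊗ b) • V ⊆ V for all b ∈ A. Then the set I = { a ∈ A : (u ⊗ a) • v = 0 for all v ∈ V } is an ideal of A. -/
open scoped TensorProduct

/-!
The identity `⁅b ⊗ h, a ⊗ u⁆ = c • (ba ⊗ u)` turns multiplication by `b` into bracketing with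
`b ⊗ h`, up to the unit `c`, which can be absorbed into `b`. A bracket of an element preserving `V`
with one killing `V` again kills `V`.
-/

section LieRingModule

variable {L M : Type*} [LieRing L] [AddCommGroup M] [LieRingModule L M]

variable (L) in
/-- The elements of a Lie ring `L` killing a subset `V` of an `L`-module. It is only recorded as an
additive subgroup, so that no scalars have to act on the module. -/
def lieAnnihilator (V : Set M) : AddSubgroup L where
  carrier := {x | ∀ v ∈ V, ⁅x, v⁆ = 0}
  zero_mem' v _ := zero_lie v
  add_mem' hx hy v hv := by rw [add_lie, hx v hv, hy v hv, add_zero]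
  neg_mem' hx v hv := by rw [neg_lie, hx v hv, neg_zero]

theorem lie_mem_lieAnnihilator {V : Set M} {x y : L} (hx : ∀ v ∈ V, ⁅x, v⁆ ∈ V)
    (hy : y ∈ lieAnnihilator L V) : ⁅x, y⁆ ∈ lieAnnihilator L V := fun v hv => by
  rw [lie_lie, hy v hv, hy _ (hx v hv), lie_zero, sub_zero]

end LieRingModule

section CurrentAlgebra

variable {R g A M : Type*} [CommRing R] [LieRing g] [LieAlgebra R g] [CommRing A] [Algebra R A]

theorem mul_tmul_eq_lie_tmul {u h : g} {c : Rˣ} (hhu : ⁅h, u⁆ = c • u) (b a : A) :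
    (b * a) ⊗ₜ[R] u = ⁅(c⁻¹ • b) ⊗ₜ[R] h, a ⊗ₜ[R] u⁆ := by
  rw [LieAlgebra.ExtendScalars.bracket_tmul, hhu, ← TensorProduct.smul_tmul, smul_mul_assoc,
    smul_inv_smul]

variable [AddCommGroup M] [LieRingModule (A ⊗[R] g) M]

/-- The ideal of those `a : A` for which `a ⊗ u` kills `V`, where `u` is an eigenvector of `ad h`
with invertible eigenvalue and every `b ⊗ h` preserves `V`. -/
def currentAnnihilatorIdeal {u h : g} {c : Rˣ} (hhu : ⁅h, u⁆ = c • u)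
    (V : Set M) (hV : ∀ b : A, ∀ v ∈ V, ⁅b ⊗ₜ[R] h, v⁆ ∈ V) : Ideal A where
  __ := ((lieAnnihilator (A ⊗[R] g) V).comap
    ((TensorProduct.mk R A g).flip u).toAddMonoidHom).toAddSubmonoid
  smul_mem' b a (ha : a ⊗ₜ[R] u ∈ lieAnnihilator (A ⊗[R] g) V) := by
    change (b * a) ⊗ₜ[R] u ∈ lieAnnihilator (A ⊗[R] g) V
    rw [mul_tmul_eq_lie_tmul hhu]
    exact lie_mem_lieAnnihilator (hV (c⁻¹ • b)) ha

theorem annihilator_set_is_ideal_general (u h : g) (c : Rˣ) (hhu : ⁅h, u⁆ = c • u)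
    (V : Set M) (hV : ∀ b : A, ∀ v ∈ V, ⁅b ⊗ₜ[R] h, v⁆ ∈ V) :
    ∃ I : Ideal A, ∀ a : A, a ∈ I ↔ ∀ v ∈ V, ⁅a ⊗ₜ[R] u, v⁆ = 0 :=
  ⟨currentAnnihilatorIdeal hhu V hV, fun _ => Iff.rfl⟩

end CurrentAlgebra

/-- Let `u, h ∈ g` with `⁅h, u⁆ = c·u`, `c ≠ 0`, let `M` be a module over
the current Lie algebra `g ⊗ A`, and let `V ⊆ M` be a ℂ-subspace with
`(h ⊗ b) • V ⊆ V` for all `b ∈ A`.  Then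
`{a ∈ A : (u ⊗ a) • v = 0 for all v ∈ V}` is an ideal of `A`. -/
theorem annihilator_set_is_ideal
    {g A M : Type*} [LieRing g] [LieAlgebra ℂ g] [CommRing A] [Algebra ℂ A]
    [AddCommGroup M] [Module ℂ M] [LieRingModule (A ⊗[ℂ] g) M]
    [LieModule ℂ (A ⊗[ℂ] g) M]
    (u h : g) (c : ℂ) (hc : c ≠ 0) (hhu : ⁅h, u⁆ = c • u)
    (V : Submodule ℂ M) (hV : ∀ b : A, ∀ v ∈ V, ⁅b ⊗ₜ[ℂ] h, v⁆ ∈ V) :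
    ∃ I : Ideal A, ∀ a : A, a ∈ I ↔ ∀ v ∈ V, ⁅a ⊗ₜ[ℂ] u, v⁆ = 0 :=
  annihilator_set_is_ideal_general u h (Units.mk0 c hc) hhu (V : Set M) hV
end
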